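/- Let p > 3 be a real number and let l be a nonzero real number. Then there exists a twice continuously differentiable function Z : (0,∞) → ℝ such that (i) Z''(r) + (3/r)·Z'(r) + |Z(r)|^{p-1}·Z(r) = 0 for all r > 0; (ii) there exist constants C > 0 and r₀ > 0 such that |r²·Z(r) − l| ≤ C·r^{4−2p} for all r ≥ r₀; and (iii) ∫₀^∞ |Z(r)|^{2(p−1)} r³ dr = ∞. -/

import Mathlib

open MeasureTheory Set
open scoped ENNReal

/-!
In the variable `τ = r ^ (2 - d)`, harmonic for the radial Laplacian of dimension `d`, a solution
with `r ^ (d - 2) Z → l` at infinity is `Z = ∫ σ in 0..τ, v σ`, where `v` solves a singular initial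
value problem at `τ = 0` with `v 0 = l`. Its energy does not increase in `τ`, so `|v| ≤ |l|` and `v`
exists for all `τ > 0`; integrating the equation once gives the rate of convergence to `l`.

In the Emden–Fowler variables `s = -log r`, `w = r ^ (2 / (p - 1)) Z`, the equation is an autonomous
oscillator with negative damping, because `p` is supercritical. Its energy increases from `0` at
`s = -∞` and so becomes positive. If `∫ |w| ^ q` were finite, where `q = d (p - 1) / 2` is the
critical exponent, the virial identity would force `w w' → ∞`, hence `|w| → ∞`: a contradiction.
-/

open Filter
open scoped NNReal Topology

/-- The odd power `|x| ^ (p - 1) x`, the nonlinearity of the Lane–Emden equation. -/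
noncomputable def oddPow (p x : ℝ) : ℝ := |x| ^ (p - 1) * x

section OddPow

variable {p : ℝ}

lemma mul_oddPow (hp : -1 < p) (x : ℝ) : x * oddPow p x = |x| ^ (p + 1) := by
  rcases eq_or_ne x 0 with rfl | hx
  · simp [oddPow, Real.zero_rpow (by linarith : p + 1 ≠ 0)]
  · rw [show p + 1 = p - 1 + 2 by ring, Real.rpow_add (abs_pos.2 hx), Real.rpow_two, sq_abs, oddPow]
    ring

lemma abs_oddPow (hp : p ≠ 0) (x : ℝ) : |oddPow p x| = |x| ^ p := by
  rcases eq_or_ne x 0 with rfl | hx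
  · simp [oddPow, Real.zero_rpow hp]
  · rw [oddPow, abs_mul, Real.abs_rpow_of_nonneg (abs_nonneg x), abs_abs,
      ← Real.rpow_add_one (abs_ne_zero.2 hx), sub_add_cancel]

lemma oddPow_mul {t : ℝ} (ht : 0 < t) (x : ℝ) : oddPow p (t * x) = t ^ p * oddPow p x := by
  have h_split : t ^ p = t ^ (p - 1) * t := by rw [← Real.rpow_add_one ht.ne', sub_add_cancel]
  rw [oddPow, oddPow, abs_mul, abs_of_pos ht, Real.mul_rpow ht.le (abs_nonneg x), h_split]
  ring

lemma continuous_oddPow (hp : 1 ≤ p) : Continuous (oddPow p) :=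
  (continuous_abs.rpow_const fun _ => Or.inr (sub_nonneg.2 hp)).mul continuous_id

lemma hasDerivAt_oddPow (hp : 1 < p) (x : ℝ) : HasDerivAt (oddPow p) (p * |x| ^ (p - 1)) x := by
  have h_away : ∀ y ≠ 0, HasDerivAt (oddPow p) (p * |y| ^ (p - 1)) y := by
    intro y hy
    refine (((hasDerivAt_abs hy).rpow_const (Or.inl (abs_ne_zero.2 hy))).mul
      (hasDerivAt_id y)).congr_deriv ?_
    rw [Real.rpow_sub_one (abs_ne_zero.2 hy)]
    have : SignType.sign y * y = |y| := sign_mul_self y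
    simp only [id]
    field_simp
    linear_combination (p - 1) * this
  rcases eq_or_ne x 0 with rfl | hx
  · exact hasDerivAt_of_hasDerivAt_of_ne h_away (continuous_oddPow hp.le).continuousAt
      ((continuous_abs.rpow_const fun _ => Or.inr (by linarith)).const_mul p).continuousAt
  · exact h_away x hx

lemma locallyLipschitz_oddPow (hp : 1 < p) : LocallyLipschitz (oddPow p) := by
  have h_deriv : deriv (oddPow p) = fun x => p * |x| ^ (p - 1) :=
    funext fun x => (hasDerivAt_oddPow hp x).deriv
  refine ContDiff.locallyLipschitz (𝕂 := ℝ) (contDiff_one_iff_deriv.2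
    ⟨fun x => (hasDerivAt_oddPow hp x).differentiableAt, ?_⟩)
  rw [h_deriv]
  exact (continuous_abs.rpow_const fun _ => Or.inr (by linarith)).const_mul p

lemma hasDerivAt_abs_rpow_div (hp : 0 < p) (x : ℝ) :
    HasDerivAt (fun x => |x| ^ (p + 1) / (p + 1)) (oddPow p x) x := by
  refine ((hasDerivAt_abs_rpow x (by linarith : 1 < p + 1)).div_const (p + 1)).congr_deriv ?_
  rw [oddPow, show p + 1 - 2 = p - 1 by ring]
  field_simp

end OddPow

/-- The mean of `v` over `[0, τ]`. Rescaling to the unit interval gives the value `v 0` at `τ = 0`,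
where `(∫ σ in 0..τ, v σ) / τ` would be `0`. -/
noncomputable def mean (v : ℝ → ℝ) (τ : ℝ) : ℝ := ∫ θ in (0 : ℝ)..1, v (τ * θ)

section Mean

variable {u v : ℝ → ℝ} {τ : ℝ}

@[simp]
lemma mean_zero (v : ℝ → ℝ) : mean v 0 = v 0 := by simp [mean]

@[simp]
lemma mean_const (c τ : ℝ) : mean (fun _ => c) τ = c := by simp [mean]

lemma continuous_mean (hv : Continuous v) : Continuous (mean v) := by
  apply intervalIntegral.continuous_parametric_intervalIntegral_of_continuous'
  fun_prop

lemma mean_eq_integral_div (v : ℝ → ℝ) (hτ : τ ≠ 0) : mean v τ = (∫ σ in (0 : ℝ)..τ, v σ) / τ := by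
  have h_scale := intervalIntegral.mul_integral_comp_mul_left (a := 0) (b := 1) (f := v) τ
  rw [mul_zero, mul_one] at h_scale
  rw [← h_scale, mean, mul_div_cancel_left₀ _ hτ]

lemma hasDerivAt_mean (hv : Continuous v) (hτ : τ ≠ 0) :
    HasDerivAt (mean v) ((v τ - mean v τ) / τ) τ := by
  have h_eq : mean v =ᶠ[𝓝 τ] fun x => (∫ σ in (0 : ℝ)..x, v σ) / x := by
    filter_upwards [isOpen_ne.mem_nhds hτ] with x hx using mean_eq_integral_div v hx
  have h_quot := (hv.integral_hasStrictDerivAt 0 τ).hasDerivAt.div (hasDerivAt_id τ) hτ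
  refine (h_quot.congr_of_eventuallyEq h_eq).congr_deriv ?_
  rw [mean_eq_integral_div v hτ]
  simp only [id]
  field_simp

lemma abs_mean_sub_mean_le {D : ℝ} (hv : Continuous v) (hu : Continuous u) (hτ : 0 ≤ τ)
    (hD : ∀ σ ∈ Icc 0 τ, |v σ - u σ| ≤ D) : |mean v τ - mean u τ| ≤ D := by
  have h_bound := intervalIntegral.norm_integral_le_of_norm_le_const (a := 0) (b := 1) (C := D)
    (f := fun θ => v (τ * θ) - u (τ * θ)) fun θ hθ => by
      rw [uIoc_of_le zero_le_one] at hθ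
      exact hD _ ⟨mul_nonneg hτ hθ.1.le, mul_le_of_le_one_right hτ hθ.2⟩
  rw [intervalIntegral.integral_sub (by apply Continuous.intervalIntegrable; fun_prop)
    (by apply Continuous.intervalIntegrable; fun_prop)] at h_bound
  simpa [mean] using h_bound

lemma abs_mean_sub_le {c D : ℝ} (hv : Continuous v) (hτ : 0 ≤ τ)
    (hD : ∀ σ ∈ Icc 0 τ, |v σ - c| ≤ D) : |mean v τ - c| ≤ D := by
  simpa using abs_mean_sub_mean_le hv continuous_const hτ hD

end Mean

/-- The weight `exp (K |τ| ^ (n + 1))` of the Bielecki norm in which the Picard map contracts. -/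
noncomputable def weight (K n τ : ℝ) : ℝ := Real.exp (K * |τ| ^ (n + 1))

section Weight

variable {K n : ℝ}

lemma weight_pos (K n τ : ℝ) : 0 < weight K n τ := Real.exp_pos _

lemma one_le_weight (hK : 0 ≤ K) (n τ : ℝ) : 1 ≤ weight K n τ :=
  Real.one_le_exp (by positivity)

lemma weight_le_weight (hK : 0 ≤ K) (hn : -1 ≤ n) {σ τ : ℝ} (h : |σ| ≤ |τ|) :
    weight K n σ ≤ weight K n τ :=
  Real.exp_le_exp.2 (mul_le_mul_of_nonneg_left
    (Real.rpow_le_rpow (abs_nonneg σ) h (by linarith)) hK)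

lemma continuous_weight (hn : -1 ≤ n) : Continuous (weight K n) :=
  Real.continuous_exp.comp
    ((continuous_abs.rpow_const fun _ => Or.inr (by linarith)).const_mul K)

lemma intervalIntegrable_rpow_mul {g : ℝ → ℝ} (hn : -1 < n) (hg : Continuous g) (a b : ℝ) :
    IntervalIntegrable (fun σ => σ ^ n * g σ) volume a b :=
  (intervalIntegral.intervalIntegrable_rpow' hn).mul_continuousOn hg.continuousOn

lemma integral_rpow_mul_weight_le (hK : 0 < K) (hn : -1 < n) {τ : ℝ} (hτ : 0 ≤ τ) :
    ∫ σ in (0 : ℝ)..τ, σ ^ n * weight K n σ ≤ weight K n τ / (K * (n + 1)) := by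
  have hn₁ : 0 < n + 1 := by linarith
  have h_deriv : ∀ σ ∈ Ioo 0 τ,
      HasDerivAt (fun σ => weight K n σ / (K * (n + 1))) (σ ^ n * weight K n σ) σ := by
    intro σ hσ
    have h_pow := (hasDerivAt_abs_pos hσ.1).rpow_const (p := n + 1)
      (Or.inl (abs_ne_zero.2 hσ.1.ne'))
    refine ((h_pow.const_mul K).exp.div_const (K * (n + 1))).congr_deriv ?_
    rw [weight, abs_of_pos hσ.1, add_sub_cancel_right]
    field_simp
  rw [intervalIntegral.integral_eq_sub_of_hasDerivAt_of_le hτ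
    ((continuous_weight hn.le).div_const _).continuousOn h_deriv
    (intervalIntegrable_rpow_mul hn (continuous_weight hn.le) 0 τ)]
  have := weight_pos K n 0
  exact sub_le_self _ (by positivity)

lemma abs_integral_rpow_mul_le (hK : 0 < K) (hn : -1 < n) {g : ℝ → ℝ} {D : ℝ}
    (hg : ∀ σ, 0 ≤ σ → |g σ| ≤ D * weight K n σ) (τ : ℝ) :
    |∫ σ in (0 : ℝ)..|τ|, σ ^ n * g σ| ≤ D * (weight K n τ / (K * (n + 1))) := by
  have hD : 0 ≤ D :=
    nonneg_of_mul_nonneg_left ((abs_nonneg _).trans (hg 0 le_rfl)) (weight_pos K n 0)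
  have h_abs : weight K n |τ| = weight K n τ := by simp [weight]
  calc |∫ σ in (0 : ℝ)..|τ|, σ ^ n * g σ|
      ≤ ∫ σ in (0 : ℝ)..|τ|, D * (σ ^ n * weight K n σ) := by
        rw [← Real.norm_eq_abs]
        refine intervalIntegral.norm_integral_le_of_norm_le (abs_nonneg τ)
          (Eventually.of_forall fun σ hσ => ?_)
          ((intervalIntegrable_rpow_mul hn (continuous_weight hn.le) _ _).const_mul D)
        have hσn : 0 ≤ σ ^ n := Real.rpow_nonneg hσ.1.le n
        rw [Real.norm_eq_abs, abs_mul, abs_of_nonneg hσn, mul_left_comm]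
        exact mul_le_mul_of_nonneg_left (hg σ hσ.1.le) hσn
    _ = D * ∫ σ in (0 : ℝ)..|τ|, σ ^ n * weight K n σ := intervalIntegral.integral_const_mul _ _
    _ ≤ D * (weight K n τ / (K * (n + 1))) := by
        rw [← h_abs]
        exact mul_le_mul_of_nonneg_left (integral_rpow_mul_weight_le hK hn (abs_nonneg τ)) hD

end Weight

/-- The Picard map of the singular initial value problem `v' = -κ τ ^ n φ (mean v τ)`, `v 0 = l`.
It only involves values at nonnegative arguments and is extended evenly, so that fixed points can be
sought among functions on all of `ℝ`. -/
noncomputable def picard (κ n l : ℝ) (φ v : ℝ → ℝ) (τ : ℝ) : ℝ :=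
  l - κ * ∫ σ in (0 : ℝ)..|τ|, σ ^ n * φ (mean v σ)

section Picard

variable {κ n l : ℝ} {φ v : ℝ → ℝ}

lemma continuous_picard (hn : -1 < n) (hφ : Continuous φ) (hv : Continuous v) :
    Continuous (picard κ n l φ v) :=
  continuous_const.sub (((intervalIntegral.continuous_primitive
    (intervalIntegrable_rpow_mul hn (hφ.comp (continuous_mean hv))) 0).comp
    continuous_abs).const_mul κ)

lemma abs_mean_sub_mean_le_weight {K D : ℝ} (hK : 0 ≤ K) (hn : -1 ≤ n) {w₁ w₂ : ℝ → ℝ}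
    (hw₁ : Continuous w₁) (hw₂ : Continuous w₂) (hD : ∀ σ, |w₁ σ - w₂ σ| ≤ D) {τ : ℝ}
    (hτ : 0 ≤ τ) :
    |mean (weight K n * w₁) τ - mean (weight K n * w₂) τ| ≤ D * weight K n τ := by
  have hw := continuous_weight (K := K) hn
  refine abs_mean_sub_mean_le (hw.mul hw₁) (hw.mul hw₂) hτ fun σ hσ => ?_
  have h_mono : weight K n σ ≤ weight K n τ :=
    weight_le_weight hK hn (abs_le_abs_of_nonneg hσ.1 hσ.2)
  rw [Pi.mul_apply, Pi.mul_apply, ← mul_sub, abs_mul, abs_of_pos (weight_pos K n σ), mul_comm D]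
  exact mul_le_mul h_mono (hD σ) (abs_nonneg _) (weight_pos K n τ).le

/-- The Picard map conjugated by the weight, so that it acts on bounded functions. -/
noncomputable def weightedPicard (K κ n l : ℝ) (φ w : ℝ → ℝ) (τ : ℝ) : ℝ :=
  picard κ n l φ (weight K n * w) τ / weight K n τ

lemma continuous_weightedPicard {K : ℝ} (hn : -1 < n) (hφ : Continuous φ) {w : ℝ → ℝ}
    (hw : Continuous w) : Continuous (weightedPicard K κ n l φ w) :=
  (continuous_picard hn hφ ((continuous_weight hn.le).mul hw)).div
    (continuous_weight hn.le) fun τ => (weight_pos K n τ).ne'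

variable {L : ℝ≥0}

lemma abs_weightedPicard_sub_le {K D : ℝ} (hK : 0 < K) (hn : -1 < n) (hφ : LipschitzWith L φ)
    {w₁ w₂ : ℝ → ℝ} (hw₁ : Continuous w₁) (hw₂ : Continuous w₂) (hD : ∀ σ, |w₁ σ - w₂ σ| ≤ D)
    (τ : ℝ) :
    |weightedPicard K κ n l φ w₁ τ - weightedPicard K κ n l φ w₂ τ|
      ≤ |κ| * L / (K * (n + 1)) * D := by
  have h_int : ∀ w, Continuous w → IntervalIntegrable
      (fun σ => σ ^ n * φ (mean (weight K n * w) σ)) volume 0 |τ| := fun w hw =>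
    intervalIntegrable_rpow_mul hn
      (hφ.continuous.comp (continuous_mean ((continuous_weight hn.le).mul hw))) _ _
  have h_lip : ∀ σ, 0 ≤ σ →
      |φ (mean (weight K n * w₁) σ) - φ (mean (weight K n * w₂) σ)| ≤ L * D * weight K n σ := by
    intro σ hσ
    rw [mul_assoc]
    exact (hφ.dist_le_mul _ _).trans (mul_le_mul_of_nonneg_left
      (abs_mean_sub_mean_le_weight hK.le hn.le hw₁ hw₂ hD hσ) L.2)
  have h_diff := abs_integral_rpow_mul_le hK hn h_lip τ
  simp only [mul_sub] at h_diff
  rw [intervalIntegral.integral_sub (h_int w₁ hw₁) (h_int w₂ hw₂)] at h_diff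
  rw [weightedPicard, weightedPicard, ← sub_div, abs_div, abs_of_pos (weight_pos K n τ),
    div_le_iff₀ (weight_pos K n τ), picard, picard, sub_sub_sub_cancel_left, ← mul_sub, abs_mul,
    abs_sub_comm]
  calc _ ≤ |κ| * (L * D * (weight K n τ / (K * (n + 1)))) :=
        mul_le_mul_of_nonneg_left h_diff (abs_nonneg κ)
    _ = |κ| * L / (K * (n + 1)) * D * weight K n τ := by ring

lemma abs_weightedPicard_zero_le {K : ℝ} (hK : 0 < K) (hn : -1 < n) (φ : ℝ → ℝ) (τ : ℝ) :
    |weightedPicard K κ n l φ 0 τ| ≤ |l| + |κ| * |φ 0| / (K * (n + 1)) := by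
  have h_zero : ∀ σ, mean 0 σ = 0 := mean_const 0
  have h_int : |∫ σ in (0 : ℝ)..|τ|, σ ^ n * φ (mean 0 σ)|
      ≤ |φ 0| * (weight K n τ / (K * (n + 1))) :=
    abs_integral_rpow_mul_le hK hn (fun σ _ => by
      rw [h_zero]; exact le_mul_of_one_le_right (abs_nonneg _) (one_le_weight hK.le n σ)) τ
  rw [weightedPicard, mul_zero, abs_div, abs_of_pos (weight_pos K n τ),
    div_le_iff₀ (weight_pos K n τ)]
  calc |picard κ n l φ 0 τ|
      ≤ |l| + |κ * ∫ σ in (0 : ℝ)..|τ|, σ ^ n * φ (mean 0 σ)| := abs_sub _ _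
    _ ≤ |l| * weight K n τ + |κ| * (|φ 0| * (weight K n τ / (K * (n + 1)))) := by
        rw [abs_mul]
        gcongr
        exact le_mul_of_one_le_right (abs_nonneg l) (one_le_weight hK.le n τ)
    _ = _ := by ring

lemma exists_isFixedPt_weightedPicard {K : ℝ} (hK : 0 < K) (hn : -1 < n) (hφ : LipschitzWith L φ)
    (h_lt : |κ| * L / (K * (n + 1)) < 1) (l : ℝ) :
    ∃ w, Continuous w ∧ Function.IsFixedPt (weightedPicard K κ n l φ) w := by
  have hn₁ : 0 < n + 1 := by linarith
  set q : ℝ≥0 := ⟨|κ| * L / (K * (n + 1)), by positivity⟩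
  have h_bdd : ∀ (w : BoundedContinuousFunction ℝ ℝ) τ,
      ‖weightedPicard K κ n l φ w τ‖ ≤ q * ‖w‖ + (|l| + |κ| * |φ 0| / (K * (n + 1))) := by
    intro w τ
    have h_diff := abs_weightedPicard_sub_le (κ := κ) (l := l) hK hn hφ w.continuous
      continuous_zero (D := ‖w‖) (by simpa using w.norm_coe_le_norm) τ
    have h_zero := abs_weightedPicard_zero_le (κ := κ) (l := l) hK hn φ τ
    exact (norm_le_norm_sub_add _ _).trans (add_le_add h_diff h_zero)
  let T (w : BoundedContinuousFunction ℝ ℝ) : BoundedContinuousFunction ℝ ℝ :=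
    .ofNormedAddCommGroup _ (continuous_weightedPicard hn hφ.continuous w.continuous) _ (h_bdd w)
  have hT : ContractingWith q T := by
    refine ⟨h_lt, LipschitzWith.of_dist_le_mul fun w₁ w₂ => ?_⟩
    rw [BoundedContinuousFunction.dist_le (by positivity)]
    exact abs_weightedPicard_sub_le hK hn hφ w₁.continuous w₂.continuous
      fun σ => w₁.dist_coe_le_dist (g := w₂) σ
  exact ⟨hT.fixedPoint, hT.fixedPoint.continuous, congrArg DFunLike.coe hT.fixedPoint_isFixedPt⟩

lemma exists_isFixedPt_picard_of_lipschitzWith (κ l : ℝ) (hn : -1 < n) (hφ : LipschitzWith L φ) :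
    ∃ v, Continuous v ∧ Function.IsFixedPt (picard κ n l φ) v := by
  have hn₁ : 0 < n + 1 := by linarith
  obtain ⟨K, hK, h_lt⟩ : ∃ K : ℝ, 0 < K ∧ |κ| * L / (K * (n + 1)) < 1 := by
    refine ⟨|κ| * L / (n + 1) + 1, by positivity, ?_⟩
    rw [div_lt_one (by positivity), add_mul, div_mul_cancel₀ _ hn₁.ne']
    linarith
  obtain ⟨w, hw, h_fix⟩ := exists_isFixedPt_weightedPicard hK hn hφ h_lt l
  refine ⟨weight K n * w, (continuous_weight hn.le).mul hw, funext fun τ => ?_⟩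
  have := congrFun h_fix τ
  rwa [weightedPicard, div_eq_iff (weight_pos K n τ).ne', mul_comm (w τ)] at this

lemma eq_of_isFixedPt_picard_zero (h_fix : Function.IsFixedPt (picard κ n l φ) v) : v 0 = l := by
  simpa [picard] using (congrFun h_fix 0).symm

lemma hasDerivAt_of_isFixedPt_picard (hn : -1 < n) (hφ : Continuous φ) (hv : Continuous v)
    (h_fix : Function.IsFixedPt (picard κ n l φ) v) {τ : ℝ} (hτ : 0 < τ) :
    HasDerivAt v (-κ * (τ ^ n * φ (mean v τ))) τ := by
  have h_cont : ContinuousOn (fun σ => σ ^ n * φ (mean v σ)) (Ioi 0) :=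
    (continuousOn_id.rpow_const fun σ hσ => Or.inl (ne_of_gt hσ)).mul
      (hφ.comp (continuous_mean hv)).continuousOn
  have h_int := intervalIntegral.integral_hasDerivAt_right
    (intervalIntegrable_rpow_mul hn (hφ.comp (continuous_mean hv)) 0 τ)
    (h_cont.stronglyMeasurableAtFilter isOpen_Ioi τ hτ) (h_cont.continuousAt (Ioi_mem_nhds hτ))
  have h_eq : v =ᶠ[𝓝 τ] fun x => l - κ * ∫ σ in (0 : ℝ)..x, σ ^ n * φ (mean v σ) := by
    filter_upwards [Ioi_mem_nhds hτ] with x hx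
    rw [← congrFun h_fix x, picard, abs_of_pos hx]
  exact (((h_int.const_mul κ).const_sub l).congr_of_eventuallyEq h_eq).congr_deriv (by simp)

lemma abs_sub_le_of_isFixedPt_picard {B : ℝ} (hn : -1 < n)
    (h_fix : Function.IsFixedPt (picard κ n l φ) v) (hB : ∀ σ, 0 ≤ σ → |φ (mean v σ)| ≤ B) {τ : ℝ}
    (hτ : 0 ≤ τ) : |v τ - l| ≤ |κ| * B / (n + 1) * τ ^ (n + 1) := by
  have h_int : |∫ σ in (0 : ℝ)..τ, σ ^ n * φ (mean v σ)| ≤ ∫ σ in (0 : ℝ)..τ, B * σ ^ n := by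
    rw [← Real.norm_eq_abs]
    refine intervalIntegral.norm_integral_le_of_norm_le hτ (Eventually.of_forall fun σ hσ => ?_)
      ((intervalIntegral.intervalIntegrable_rpow' hn).const_mul B)
    have hσn : 0 ≤ σ ^ n := Real.rpow_nonneg hσ.1.le n
    rw [Real.norm_eq_abs, abs_mul, abs_of_nonneg hσn, mul_comm]
    exact mul_le_mul_of_nonneg_right (hB σ hσ.1.le) hσn
  rw [intervalIntegral.integral_const_mul, integral_rpow (Or.inl hn),
    Real.zero_rpow (by linarith), sub_zero] at h_int
  rw [← congrFun h_fix τ, picard, abs_of_nonneg hτ, sub_sub_cancel_left, abs_neg, abs_mul]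
  exact (mul_le_mul_of_nonneg_left h_int (abs_nonneg κ)).trans_eq (by ring)

lemma abs_mean_sub_le_of_isFixedPt_picard {B : ℝ} (hn : -1 < n) (hv : Continuous v)
    (h_fix : Function.IsFixedPt (picard κ n l φ) v) (hB : ∀ σ, 0 ≤ σ → |φ (mean v σ)| ≤ B) {τ : ℝ}
    (hτ : 0 ≤ τ) : |mean v τ - l| ≤ |κ| * B / (n + 1) * τ ^ (n + 1) := by
  have hn₁ : 0 < n + 1 := by linarith
  have hB₀ : 0 ≤ B := (abs_nonneg _).trans (hB 0 le_rfl)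
  refine abs_mean_sub_le hv hτ fun σ hσ =>
    (abs_sub_le_of_isFixedPt_picard hn h_fix hB hσ.1).trans ?_
  gcongr
  exacts [hσ.1, hσ.2]

end Picard

section Bootstrap

lemma le_of_bootstrap {f : ℝ → ℝ} {a b : ℝ} (hf : Continuous f) (hab : a < b) (h₀ : f 0 ≤ a)
    (h_improve : ∀ T, 0 ≤ T → (∀ t ∈ Ico 0 T, f t ≤ b) → f T ≤ a) {T : ℝ} (hT : 0 ≤ T) :
    f T ≤ a := by
  suffices h_sub : Icc 0 T ⊆ {t | f t ≤ a} from h_sub (right_mem_Icc.2 hT)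
  refine IsClosed.Icc_subset_of_forall_mem_nhdsGT_of_Icc_subset
    ((isClosed_le hf continuous_const).inter isClosed_Icc) h₀ fun t ht h_Icc => ?_
  have h_near : ∀ᶠ x in 𝓝 t, f x < b :=
    hf.continuousAt.eventually_lt_const ((h_Icc (right_mem_Icc.2 ht.1)).trans_lt hab)
  obtain ⟨ε, hε, h_ball⟩ := Metric.eventually_nhds_iff.1 h_near
  filter_upwards [Ioo_mem_nhdsGT (lt_add_of_pos_right t hε)] with x hx
  refine h_improve x (ht.1.trans hx.1.le) fun y hy => ?_
  rcases le_total y t with hyt | hty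
  · exact (h_Icc ⟨hy.1, hyt⟩).out.trans hab.le
  · refine (h_ball ?_).le
    rw [Real.dist_eq, abs_of_nonneg (by linarith)]
    linarith [hy.2, hx.2]

lemma exists_lipschitzWith_comp_projIcc {f : ℝ → ℝ} (hf : LocallyLipschitz f) {a b : ℝ}
    (hab : a ≤ b) : ∃ L, LipschitzWith L fun x => f (projIcc a b hab x) := by
  obtain ⟨L, hL⟩ := (hf.locallyLipschitzOn (s := Icc a b)).exists_lipschitzOnWith_of_compact
    isCompact_Icc
  exact ⟨L * 1, hL.to_restrict.comp (LipschitzWith.projIcc hab)⟩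

variable {κ n l : ℝ} {φ Φ v : ℝ → ℝ}

/-- The energy of `v' = -κ τ ^ n φ (mean v τ)`, where `Φ` is a primitive of `φ`. -/
noncomputable def meanEnergy (κ n : ℝ) (Φ v : ℝ → ℝ) (τ : ℝ) : ℝ :=
  v τ ^ 2 / 2 + κ * (τ ^ (n + 1) * Φ (mean v τ))

lemma continuous_meanEnergy (hn : -1 ≤ n) (hΦ : Continuous Φ) (hv : Continuous v) :
    Continuous (meanEnergy κ n Φ v) :=
  ((hv.pow 2).div_const 2).add (((Real.continuous_rpow_const (by linarith)).mul
    (hΦ.comp (continuous_mean hv))).const_mul κ)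

lemma hasDerivAt_meanEnergy (hΦ : ∀ x, HasDerivAt Φ (φ x) x) (hv : Continuous v) {τ : ℝ}
    (hτ : 0 < τ) (hv' : HasDerivAt v (-κ * (τ ^ n * φ (mean v τ))) τ) :
    HasDerivAt (meanEnergy κ n Φ v)
      (κ * τ ^ n * ((n + 1) * Φ (mean v τ) - mean v τ * φ (mean v τ))) τ := by
  have h_pot := (Real.hasDerivAt_rpow_const (p := n + 1) (Or.inl hτ.ne')).mul
    ((hΦ (mean v τ)).comp τ (hasDerivAt_mean hv hτ.ne'))
  refine (((hv'.pow 2).div_const 2).add (h_pot.const_mul κ)).congr_deriv ?_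
  rw [add_sub_cancel_right, Real.rpow_add_one hτ.ne']
  simp only [Function.comp]
  field_simp
  ring

lemma abs_le_of_hasDerivAt_mean (hκ : 0 ≤ κ) (hn : -1 < n) (hΦ : ∀ x, HasDerivAt Φ (φ x) x)
    (hΦ₀ : ∀ x, 0 ≤ Φ x) (hΦφ : ∀ x, (n + 1) * Φ x ≤ x * φ x) (hv : Continuous v) {T : ℝ}
    (hT : 0 ≤ T)
    (hv' : ∀ τ ∈ Ioo 0 T, HasDerivAt v (-κ * (τ ^ n * φ (mean v τ))) τ) : |v T| ≤ |v 0| := by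
  have hΦ_cont : Continuous Φ := continuous_iff_continuousAt.2 fun x => (hΦ x).continuousAt
  have h_anti : AntitoneOn (meanEnergy κ n Φ v) (Icc 0 T) := by
    refine antitoneOn_of_hasDerivWithinAt_nonpos (convex_Icc 0 T)
      (f' := fun τ => κ * τ ^ n * ((n + 1) * Φ (mean v τ) - mean v τ * φ (mean v τ)))
      (continuous_meanEnergy hn.le hΦ_cont hv).continuousOn (fun τ hτ => ?_) fun τ hτ => ?_
    all_goals rw [interior_Icc] at hτ
    · exact (hasDerivAt_meanEnergy hΦ hv hτ.1 (hv' τ hτ)).hasDerivWithinAt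
    · exact mul_nonpos_of_nonneg_of_nonpos (mul_nonneg hκ (Real.rpow_nonneg hτ.1.le n))
        (sub_nonpos.2 (hΦφ _))
  have h_le : meanEnergy κ n Φ v T ≤ v 0 ^ 2 / 2 := by
    simpa [meanEnergy, Real.zero_rpow (by linarith : n + 1 ≠ 0)] using
      h_anti (left_mem_Icc.2 hT) (right_mem_Icc.2 hT) hT
  have h_pot : 0 ≤ κ * (T ^ (n + 1) * Φ (mean v T)) :=
    mul_nonneg hκ (mul_nonneg (Real.rpow_nonneg hT _) (hΦ₀ _))
  rw [meanEnergy] at h_le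
  exact sq_le_sq.1 (by linarith)

lemma abs_mean_le_of_isFixedPt_picard_truncated (hκ : 0 ≤ κ) (hn : -1 < n)
    (hΦ : ∀ x, HasDerivAt Φ (φ x) x) (hΦ₀ : ∀ x, 0 ≤ Φ x)
    (hΦφ : ∀ x, (n + 1) * Φ x ≤ x * φ x) {M : ℝ} (hM : |l| < M) {ψ : ℝ → ℝ} (hψ : Continuous ψ)
    (hψφ : ∀ x, |x| ≤ M → ψ x = φ x) (hv : Continuous v)
    (h_fix : Function.IsFixedPt (picard κ n l ψ) v) {τ : ℝ} (hτ : 0 ≤ τ) : |mean v τ| ≤ |l| := by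
  have hv₀ : v 0 = l := eq_of_isFixedPt_picard_zero h_fix
  refine le_of_bootstrap (continuous_mean hv).abs hM (by simp [hv₀]) (fun T hT hT_le => ?_) hτ
  have h_v : ∀ τ ∈ Icc 0 T, |v τ| ≤ |l| := by
    intro τ hτ
    rw [← hv₀]
    refine abs_le_of_hasDerivAt_mean hκ hn hΦ hΦ₀ hΦφ hv hτ.1 fun σ hσ => ?_
    rw [← hψφ _ (hT_le σ ⟨hσ.1.le, hσ.2.trans_le hτ.2⟩)]
    exact hasDerivAt_of_isFixedPt_picard hn hψ hv h_fix hσ.1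
  simpa using abs_mean_sub_le (c := 0) hv hT (by simpa using h_v)

lemma exists_isFixedPt_picard (hκ : 0 ≤ κ) (hn : -1 < n) (hφ : LocallyLipschitz φ)
    (hΦ : ∀ x, HasDerivAt Φ (φ x) x) (hΦ₀ : ∀ x, 0 ≤ Φ x)
    (hΦφ : ∀ x, (n + 1) * Φ x ≤ x * φ x) (l : ℝ) :
    ∃ v, Continuous v ∧ Function.IsFixedPt (picard κ n l φ) v ∧
      ∀ τ, 0 ≤ τ → |mean v τ| ≤ |l| := by
  have hM : -(|l| + 1) ≤ |l| + 1 := by linarith [abs_nonneg l]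
  let ψ x := φ (projIcc (-(|l| + 1)) (|l| + 1) hM x)
  have hψφ : ∀ x, |x| ≤ |l| + 1 → ψ x = φ x := fun x hx => by
    simp only [ψ, projIcc_of_mem hM (abs_le.1 hx)]
  obtain ⟨L, hψ⟩ : ∃ L, LipschitzWith L ψ := exists_lipschitzWith_comp_projIcc hφ hM
  obtain ⟨v, hv, h_fix⟩ := exists_isFixedPt_picard_of_lipschitzWith κ l hn hψ
  have h_mean : ∀ τ, 0 ≤ τ → |mean v τ| ≤ |l| := fun τ =>
    abs_mean_le_of_isFixedPt_picard_truncated hκ hn hΦ hΦ₀ hΦφ (lt_add_one _) hψ.continuous hψφ hv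
      h_fix
  refine ⟨v, hv, ?_, h_mean⟩
  have h_eq : picard κ n l φ v = picard κ n l ψ v := by
    funext τ
    rw [picard, picard]
    congr 2
    refine intervalIntegral.integral_congr fun σ hσ => ?_
    rw [uIcc_of_le (abs_nonneg τ)] at hσ
    simp only [hψφ _ ((h_mean σ hσ.1).trans (lt_add_one _).le)]
  exact h_eq.trans h_fix

end Bootstrap

section Growth

lemma tendsto_atTop_of_eventually_le_hasDerivAt {f f' : ℝ → ℝ} {ε : ℝ} (hε : 0 < ε)
    (hf : ∀ s, HasDerivAt f (f' s) s) (h_le : ∀ᶠ s in atTop, ε ≤ f' s) :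
    Tendsto f atTop atTop := by
  obtain ⟨s₀, hs₀⟩ := eventually_atTop.1 h_le
  have h_growth : ∀ s ≥ s₀, f s₀ + ε * (s - s₀) ≤ f s := by
    intro s hs
    have := (convex_Ici s₀).mul_sub_le_image_sub_of_le_deriv
      (fun x _ => (hf x).continuousAt.continuousWithinAt)
      (fun x _ => (hf x).differentiableAt.differentiableWithinAt)
      (fun x hx => by rw [(hf x).deriv]; exact hs₀ x (interior_subset hx)) s₀ self_mem_Ici s hs hs
    linarith
  refine tendsto_atTop_mono' atTop (eventually_atTop.2 ⟨s₀, h_growth⟩) ?_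
  exact tendsto_atTop_add_const_left _ _
    ((tendsto_atTop_add_const_right _ _ tendsto_id).const_mul_atTop hε)

lemma not_integrable_of_tendsto_atTop {f : ℝ → ℝ} (hf : Tendsto f atTop atTop) :
    ¬ Integrable f := by
  intro h_int
  obtain ⟨s₀, hs₀⟩ := eventually_atTop.1 (hf.eventually_ge_atTop 1)
  have h_sub : Ici s₀ ⊆ {s | 1 ≤ ‖f s‖} := fun s hs => (hs₀ s hs).trans (le_abs_self _)
  have h_lt := (measure_mono h_sub).trans_lt (h_int.measure_norm_ge_lt_top one_pos)
  simp at h_lt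

lemma exists_mul_rpow_le_add_mul_rpow {k ε α β : ℝ} (hk : 0 < k) (hε : 0 < ε) (hα : 0 < α)
    (hαβ : α ≤ β) : ∃ C, 0 ≤ C ∧ ∀ x, 0 ≤ x → k * x ^ α ≤ ε + C * x ^ β := by
  obtain ⟨δ, hδ, hδε⟩ : ∃ δ : ℝ, 0 < δ ∧ k * δ ^ α = ε := by
    refine ⟨(ε / k) ^ α⁻¹, by positivity, ?_⟩
    rw [Real.rpow_inv_rpow (by positivity) hα.ne', mul_div_cancel₀ _ hk.ne']
  refine ⟨k * δ ^ (α - β), by positivity, fun x hx => ?_⟩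
  rcases le_total x δ with hxδ | hδx
  · calc k * x ^ α ≤ k * δ ^ α := by gcongr
      _ ≤ ε + k * δ ^ (α - β) * x ^ β := by rw [hδε]; exact le_add_of_nonneg_right (by positivity)
  · have h_pow : x ^ (α - β) ≤ δ ^ (α - β) := Real.rpow_le_rpow_of_nonpos hδ hδx (by linarith)
    calc k * x ^ α = k * x ^ (α - β) * x ^ β := by
          rw [mul_assoc, ← Real.rpow_add (hδ.trans_le hδx), sub_add_cancel]
      _ ≤ k * δ ^ (α - β) * x ^ β := by gcongr
      _ ≤ ε + k * δ ^ (α - β) * x ^ β := le_add_of_nonneg_left hε.le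

end Growth

/-- The mechanical energy of a trajectory `w` with velocity `w'` in the potential `F`. -/
noncomputable def energy (F w w' : ℝ → ℝ) (s : ℝ) : ℝ := w' s ^ 2 / 2 + F (w s)

section Antidamped

variable {c q : ℝ} {f F w w' : ℝ → ℝ}

lemma hasDerivAt_energy (hF : ∀ x, HasDerivAt F (f x) x) (hw : ∀ s, HasDerivAt w (w' s) s)
    (hw' : ∀ s, HasDerivAt w' (c * w' s - f (w s)) s) (s : ℝ) :
    HasDerivAt (energy F w w') (c * w' s ^ 2) s := by
  refine ((((hw' s).pow 2).div_const 2).add ((hF (w s)).comp s (hw s))).congr_deriv ?_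
  push_cast
  ring

lemma monotone_energy (hc : 0 ≤ c) (hF : ∀ x, HasDerivAt F (f x) x)
    (hw : ∀ s, HasDerivAt w (w' s) s) (hw' : ∀ s, HasDerivAt w' (c * w' s - f (w s)) s) :
    Monotone (energy F w w') :=
  monotone_of_hasDerivAt_nonneg (hasDerivAt_energy hF hw hw') fun _ => mul_nonneg hc (sq_nonneg _)

/- Otherwise the energy, which increases from its limit `0` at `-∞`, is constant; then `w' = 0` and
`w` is constant. -/
lemma exists_energy_pos (hc : 0 < c) (hF : ∀ x, HasDerivAt F (f x) x) (hF₀ : F 0 = 0)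
    (hw : ∀ s, HasDerivAt w (w' s) s) (hw' : ∀ s, HasDerivAt w' (c * w' s - f (w s)) s)
    (hw_bot : Tendsto w atBot (𝓝 0)) (hw'_bot : Tendsto w' atBot (𝓝 0)) (hw_ne : ∃ s, w s ≠ 0) :
    ∃ s, 0 < energy F w w' s := by
  by_contra! h_nonpos
  have hE_bot : Tendsto (energy F w w') atBot (𝓝 0) := by
    have hFw := (hF 0).continuousAt.tendsto.comp hw_bot
    rw [hF₀] at hFw
    simpa using! ((hw'_bot.pow 2).div_const 2).add hFw
  have hE_zero : energy F w w' = fun _ => 0 := funext fun s =>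
    (h_nonpos s).antisymm ((monotone_energy hc.le hF hw hw').le_of_tendsto hE_bot s)
  have hw'_zero : ∀ s, w' s = 0 := by
    intro s
    have h_deriv := hasDerivAt_energy hF hw hw' s
    rw [hE_zero] at h_deriv
    simpa [hc.ne'] using h_deriv.unique (hasDerivAt_const s 0)
  have hw_const : ∀ x y, w x = w y :=
    is_const_of_deriv_eq_zero (fun s => (hw s).differentiableAt)
      fun s => (hw s).deriv.trans (hw'_zero s)
  obtain ⟨s, hs⟩ := hw_ne
  rw [show w = fun _ => w s from funext fun x => hw_const x s] at hw_bot
  exact hs (tendsto_nhds_unique tendsto_const_nhds hw_bot)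

/- The virial quantity `w w' - c w² / 2` has derivative `2 E - (2 F w + w f w)`, where `E` is the
energy, so positive energy makes it grow linearly up to a multiple of `∫ |w| ^ q`. -/
lemma tendsto_mul_deriv_atTop (hc : 0 ≤ c) (hq : 0 ≤ q) (hF : ∀ x, HasDerivAt F (f x) x)
    (hw : ∀ s, HasDerivAt w (w' s) s) (hw' : ∀ s, HasDerivAt w' (c * w' s - f (w s)) s)
    (h_int : Integrable fun s => |w s| ^ q) {s₁ C : ℝ} (hE : 0 < energy F w w' s₁) (hC : 0 ≤ C)
    (h_virial : ∀ x, 2 * F x + x * f x ≤ energy F w w' s₁ + C * |x| ^ q) :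
    Tendsto (fun s => w s * w' s) atTop atTop := by
  have hw_cont : Continuous w := continuous_iff_continuousAt.2 fun s => (hw s).continuousAt
  let V s := w s * w' s - c * w s ^ 2 / 2 + C * ∫ t in s₁..s, |w t| ^ q
  have hV : ∀ s, HasDerivAt V
      (2 * energy F w w' s - (2 * F (w s) + w s * f (w s)) + C * |w s| ^ q) s := by
    intro s
    have h_int := ((hw_cont.abs.rpow_const fun _ => Or.inr hq).integral_hasStrictDerivAt s₁ s)
    refine ((((hw s).mul (hw' s)).sub ((((hw s).pow 2).const_mul c).div_const 2)).add
      (h_int.hasDerivAt.const_mul C)).congr_deriv ?_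
    simp only [energy]
    push_cast
    ring
  have hV_top : Tendsto V atTop atTop := by
    refine tendsto_atTop_of_eventually_le_hasDerivAt hE hV ?_
    filter_upwards [eventually_ge_atTop s₁] with s hs
    linarith [monotone_energy hc hF hw hw' hs, h_virial (w s)]
  refine tendsto_atTop_mono' atTop ?_
    (tendsto_atTop_add_const_right _ (-(C * ∫ t, |w t| ^ q)) hV_top)
  filter_upwards [eventually_ge_atTop s₁] with s hs
  have h_le : ∫ t in s₁..s, |w t| ^ q ≤ ∫ t, |w t| ^ q := by
    rw [intervalIntegral.integral_of_le hs]
    exact setIntegral_le_integral h_int (Eventually.of_forall fun t => by positivity)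
  have h_sq : 0 ≤ c * w s ^ 2 / 2 := by positivity
  simp only [V]
  linarith [mul_le_mul_of_nonneg_left h_le hC]

lemma lintegral_abs_rpow_eq_top_of_energy_pos (hc : 0 ≤ c) (hq : 0 < q)
    (hF : ∀ x, HasDerivAt F (f x) x)
    (h_virial : ∀ ε > 0, ∃ C, 0 ≤ C ∧ ∀ x, 2 * F x + x * f x ≤ ε + C * |x| ^ q)
    (hw : ∀ s, HasDerivAt w (w' s) s) (hw' : ∀ s, HasDerivAt w' (c * w' s - f (w s)) s) {s₁ : ℝ}
    (hE : 0 < energy F w w' s₁) : ∫⁻ s, ENNReal.ofReal (|w s| ^ q) = ⊤ := by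
  by_contra h_fin
  have hw_cont : Continuous w := continuous_iff_continuousAt.2 fun s => (hw s).continuousAt
  have h_int : Integrable fun s => |w s| ^ q := by
    refine (lintegral_ofReal_ne_top_iff_integrable
      (hw_cont.abs.rpow_const fun _ => Or.inr hq.le).aestronglyMeasurable
      (Eventually.of_forall fun s => ?_)).1 h_fin
    exact Real.rpow_nonneg (abs_nonneg _) q
  obtain ⟨C, hC, hC_le⟩ := h_virial _ hE
  have h_mul := tendsto_mul_deriv_atTop hc hq.le hF hw hw' h_int hE hC hC_le
  have h_sq : Tendsto (fun s => w s ^ 2) atTop atTop :=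
    tendsto_atTop_of_eventually_le_hasDerivAt two_pos
      (fun s => ((hw s).pow 2).congr_deriv (by push_cast; ring))
      ((h_mul.const_mul_atTop two_pos).eventually_ge_atTop 2)
  have h_abs : Tendsto (fun s => |w s|) atTop atTop :=
    (Real.tendsto_sqrt_atTop.comp h_sq).congr fun s => Real.sqrt_sq_eq_abs (w s)
  exact not_integrable_of_tendsto_atTop ((tendsto_rpow_atTop hq).comp h_abs) h_int

end Antidamped

/-- The pair of `Z` and its derivative `Z'` solves the Lane–Emden equation
`Z'' + (d - 1) / r * Z' + |Z| ^ (p - 1) Z = 0` on `(0, ∞)`: the radial form of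
`ΔZ + |Z| ^ (p - 1) Z = 0` in dimension `d`, which is allowed to be any real number. -/
structure IsLaneEmdenSolution (d p : ℝ) (Z Z' : ℝ → ℝ) : Prop where
  hasDerivAt : ∀ r, 0 < r → HasDerivAt Z (Z' r) r
  hasDerivAt_deriv : ∀ r, 0 < r → HasDerivAt Z' (-((d - 1) / r) * Z' r - oddPow p (Z r)) r

namespace IsLaneEmdenSolution

variable {d p : ℝ} {Z Z' : ℝ → ℝ}

lemma hasDerivAt_deriv_deriv (h : IsLaneEmdenSolution d p Z Z') {r : ℝ} (hr : 0 < r) :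
    HasDerivAt (deriv Z) (-((d - 1) / r) * deriv Z r - oddPow p (Z r)) r := by
  have h_deriv : deriv Z =ᶠ[𝓝 r] Z' := by
    filter_upwards [Ioi_mem_nhds hr] with x hx using (h.hasDerivAt x hx).deriv
  rw [h_deriv.eq_of_nhds]
  exact (h.hasDerivAt_deriv r hr).congr_of_eventuallyEq h_deriv

lemma deriv_deriv_add_eq_zero (h : IsLaneEmdenSolution d p Z Z') {r : ℝ} (hr : 0 < r) :
    deriv (deriv Z) r + (d - 1) / r * deriv Z r + |Z r| ^ (p - 1) * Z r = 0 := by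
  rw [(h.hasDerivAt_deriv_deriv hr).deriv, oddPow]
  ring

lemma contDiffOn (h : IsLaneEmdenSolution d p Z Z') (hp : 1 ≤ p) : ContDiffOn ℝ 2 Z (Ioi 0) := by
  have hZ_cont : ContinuousOn Z (Ioi 0) := HasDerivAt.continuousOn h.hasDerivAt
  have hZ'_cont : ContinuousOn (deriv Z) (Ioi 0) :=
    HasDerivAt.continuousOn fun _ => h.hasDerivAt_deriv_deriv
  rw [← one_add_one_eq_two, contDiffOn_succ_iff_deriv_of_isOpen isOpen_Ioi]
  refine ⟨fun r hr => (h.hasDerivAt r hr).differentiableAt.differentiableWithinAt, by simp, ?_⟩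
  rw [← zero_add 1, contDiffOn_succ_iff_deriv_of_isOpen isOpen_Ioi]
  refine ⟨fun r hr => (h.hasDerivAt_deriv_deriv hr).differentiableAt.differentiableWithinAt,
    by simp, contDiffOn_zero.2 ?_⟩
  have h_cont : ContinuousOn (fun r => -((d - 1) / r) * deriv Z r - oddPow p (Z r)) (Ioi 0) :=
    ((continuousOn_const.div continuousOn_id fun _ hr => ne_of_gt hr).neg.mul hZ'_cont).sub
      ((continuous_oddPow hp).comp_continuousOn hZ_cont)
  exact h_cont.congr fun r hr => (h.hasDerivAt_deriv_deriv hr).deriv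

end IsLaneEmdenSolution

/-- The function `τ * mean v τ = ∫ σ in 0..τ, v σ` of the fundamental solution `τ = r ^ (2 - d)` of
the radial Laplacian in dimension `d`. -/
noncomputable def singularProfile (d : ℝ) (v : ℝ → ℝ) (r : ℝ) : ℝ :=
  r ^ (2 - d) * mean v (r ^ (2 - d))

section SingularProfile

variable {d p : ℝ} {v : ℝ → ℝ}

lemma hasDerivAt_mul_mean (hv : Continuous v) {τ : ℝ} (hτ : τ ≠ 0) :
    HasDerivAt (fun τ => τ * mean v τ) (v τ) τ := by
  refine ((hasDerivAt_id τ).mul (hasDerivAt_mean hv hτ)).congr_deriv ?_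
  simp only [id]
  field_simp
  ring

lemma hasDerivAt_singularProfile (hv : Continuous v) {r : ℝ} (hr : 0 < r) :
    HasDerivAt (singularProfile d v) ((2 - d) * r ^ (1 - d) * v (r ^ (2 - d))) r := by
  have h_pow : HasDerivAt (fun x => x ^ (2 - d)) ((2 - d) * r ^ (1 - d)) r := by
    simpa [show 2 - d - 1 = 1 - d by ring] using
      Real.hasDerivAt_rpow_const (p := 2 - d) (Or.inl hr.ne')
  have h_ne : r ^ (2 - d) ≠ 0 := (Real.rpow_pos_of_pos hr _).ne'
  exact ((hasDerivAt_mul_mean hv h_ne).comp r h_pow).congr_deriv (mul_comm _ _)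

lemma rpow_mul_singularProfile {r : ℝ} (hr : 0 < r) :
    r ^ (d - 2) * singularProfile d v r = mean v (r ^ (2 - d)) := by
  rw [singularProfile, ← mul_assoc, ← Real.rpow_add hr, sub_add_sub_cancel, sub_self,
    Real.rpow_zero, one_mul]

/-- The exponent `n` for which the substitution `τ = r ^ (2 - d)` turns the Lane–Emden equation into
`v' = -κ τ ^ n oddPow p (mean v τ)` with `κ = (d - 2)⁻²`. -/
noncomputable def fundamentalExponent (d p : ℝ) : ℝ := p - 2 * (d - 1) / (d - 2)

lemma sub_two_mul_fundamentalExponent (hd : 2 < d) :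
    (2 - d) * fundamentalExponent d p = (2 - d) * p + 2 * (d - 1) := by
  have : d - 2 ≠ 0 := by linarith
  rw [fundamentalExponent]
  field_simp
  ring

lemma neg_one_lt_fundamentalExponent (hd : 2 < d) (hp : d < (d - 2) * p) :
    -1 < fundamentalExponent d p := by
  have h_eq := sub_two_mul_fundamentalExponent (p := p) hd
  by_contra! h_le
  nlinarith

lemma fundamentalExponent_le (hd : 2 < d) : fundamentalExponent d p ≤ p :=
  sub_le_self _ (div_nonneg (by linarith) (by linarith))

lemma exists_isFixedPt_picard_oddPow (hd : 2 < d) (hp : 1 < p)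
    (hn : -1 < fundamentalExponent d p) (l : ℝ) :
    ∃ v, Continuous v ∧ Function.IsFixedPt
      (picard ((d - 2) ^ 2)⁻¹ (fundamentalExponent d p) l (oddPow p)) v ∧
      ∀ τ, 0 ≤ τ → |mean v τ| ≤ |l| := by
  refine exists_isFixedPt_picard (by positivity) hn (locallyLipschitz_oddPow hp)
    (hasDerivAt_abs_rpow_div (by linarith)) (fun x => by positivity) (fun x => ?_) l
  have hp₁ : 0 < p + 1 := by linarith
  rw [mul_oddPow (by linarith), mul_div_assoc', div_le_iff₀ hp₁, mul_comm]
  gcongr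
  exact fundamentalExponent_le hd

lemma isLaneEmdenSolution_singularProfile (hd : 2 < d) (hv : Continuous v)
    (hv' : ∀ τ, 0 < τ → HasDerivAt v
      (-((d - 2) ^ 2)⁻¹ * (τ ^ fundamentalExponent d p * oddPow p (mean v τ))) τ) :
    IsLaneEmdenSolution d p (singularProfile d v)
      fun r => (2 - d) * r ^ (1 - d) * v (r ^ (2 - d)) where
  hasDerivAt _ hr := hasDerivAt_singularProfile hv hr
  hasDerivAt_deriv r hr := by
    have hτ : 0 < r ^ (2 - d) := Real.rpow_pos_of_pos hr _
    have h_coeff : r ^ (1 - d - 1) = r ^ (1 - d) / r := Real.rpow_sub_one hr.ne' _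
    have h_pow : (r ^ (2 - d)) ^ p =
        (r ^ (2 - d)) ^ fundamentalExponent d p * (r ^ (1 - d)) ^ 2 := by
      rw [← Real.rpow_natCast, ← Real.rpow_mul hr.le, ← Real.rpow_mul hr.le, ← Real.rpow_mul hr.le,
        ← Real.rpow_add hr, sub_two_mul_fundamentalExponent hd]
      congr 1
      push_cast
      ring
    have h_v := (hv' _ hτ).comp r (Real.hasDerivAt_rpow_const (p := 2 - d) (Or.inl hr.ne'))
    refine (((Real.hasDerivAt_rpow_const (p := 1 - d) (Or.inl hr.ne')).const_mul
      (2 - d)).mul h_v).congr_deriv ?_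
    rw [singularProfile, oddPow_mul hτ, h_pow, h_coeff, show 2 - d - 1 = 1 - d by ring]
    have : d - 2 ≠ 0 := by linarith
    simp only [Function.comp]
    field_simp
    ring

lemma tendsto_rpow_two_sub_atTop (hd : 2 < d) :
    Tendsto (fun r : ℝ => r ^ (2 - d)) atTop (𝓝 0) := by
  simpa using tendsto_rpow_neg_atTop (sub_pos.2 hd)

lemma tendsto_mean_comp_rpow_atTop (hd : 2 < d) (hv : Continuous v) :
    Tendsto (fun r => mean v (r ^ (2 - d))) atTop (𝓝 (v 0)) := by
  rw [← mean_zero v]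
  exact ((continuous_mean hv).tendsto 0).comp (tendsto_rpow_two_sub_atTop hd)

lemma tendsto_rpow_mul_singularProfile {a : ℝ} (hd : 2 < d) (ha : a < d - 2) (hv : Continuous v) :
    Tendsto (fun r => r ^ a * singularProfile d v r) atTop (𝓝 0) := by
  have h_pow := tendsto_rpow_neg_atTop (sub_pos.2 ha)
  refine (zero_mul (v 0) ▸ h_pow.mul (tendsto_mean_comp_rpow_atTop hd hv)).congr' ?_
  filter_upwards [eventually_gt_atTop 0] with r hr
  rw [singularProfile, ← mul_assoc, ← Real.rpow_add hr]
  ring_nf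

lemma tendsto_rpow_mul_deriv_singularProfile {a : ℝ} (hd : 2 < d) (ha : a < d - 2)
    (hv : Continuous v) :
    Tendsto (fun r => r ^ (a + 1) * ((2 - d) * r ^ (1 - d) * v (r ^ (2 - d)))) atTop (𝓝 0) := by
  have h_pow := (tendsto_rpow_neg_atTop (sub_pos.2 ha)).const_mul (2 - d)
  have h_v := (hv.tendsto 0).comp (tendsto_rpow_two_sub_atTop hd)
  rw [mul_zero] at h_pow
  refine (zero_mul (v 0) ▸ h_pow.mul h_v).congr' ?_
  filter_upwards [eventually_gt_atTop 0] with r hr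
  rw [show -(d - 2 - a) = a + 1 + (1 - d) by ring, Real.rpow_add hr, Function.comp]
  ring

lemma exists_singularProfile_ne_zero (hd : 2 < d) (hv : Continuous v) (hv₀ : v 0 ≠ 0) :
    ∃ r, 0 < r ∧ singularProfile d v r ≠ 0 := by
  obtain ⟨r, hr, h_ne⟩ := ((eventually_gt_atTop 0).and
    ((tendsto_mean_comp_rpow_atTop hd hv).eventually_ne hv₀)).exists
  exact ⟨r, hr, mul_ne_zero (Real.rpow_pos_of_pos hr _).ne' h_ne⟩

lemma abs_rpow_mul_singularProfile_sub_le {l : ℝ} (hd : 2 < d) (hp : d < (d - 2) * p)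
    (hv : Continuous v)
    (h_fix : Function.IsFixedPt
      (picard ((d - 2) ^ 2)⁻¹ (fundamentalExponent d p) l (oddPow p)) v)
    (h_mean : ∀ τ, 0 ≤ τ → |mean v τ| ≤ |l|) {r : ℝ} (hr : 0 < r) :
    |r ^ (d - 2) * singularProfile d v r - l|
      ≤ ((d - 2) ^ 2)⁻¹ * |l| ^ p / (fundamentalExponent d p + 1) * r ^ (d - (d - 2) * p) := by
  have hp₀ : 0 < p := pos_of_mul_pos_right (by linarith : 0 < (d - 2) * p) (by linarith)
  have h_bound : ∀ τ, 0 ≤ τ → |oddPow p (mean v τ)| ≤ |l| ^ p := fun τ hτ =>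
    (abs_oddPow hp₀.ne' _).trans_le (Real.rpow_le_rpow (abs_nonneg _) (h_mean τ hτ) hp₀.le)
  have h_exp : (2 - d) * (fundamentalExponent d p + 1) = d - (d - 2) * p := by
    rw [mul_add, sub_two_mul_fundamentalExponent hd]
    ring
  rw [rpow_mul_singularProfile hr, ← h_exp, Real.rpow_mul hr.le]
  simpa using abs_mean_sub_le_of_isFixedPt_picard (neg_one_lt_fundamentalExponent hd hp) hv h_fix
    h_bound (Real.rpow_nonneg hr.le (2 - d))

end SingularProfile

/-- The Emden–Fowler transform `s ↦ r ^ a g(r)` with `r = exp (-s)`. -/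
noncomputable def emdenFowler (a : ℝ) (g : ℝ → ℝ) (s : ℝ) : ℝ :=
  Real.exp (-s) ^ a * g (Real.exp (-s))

section EmdenFowler

variable {a d p : ℝ} {g Z Z' : ℝ → ℝ}

lemma hasDerivAt_exp_neg (s : ℝ) : HasDerivAt (fun s => Real.exp (-s)) (-Real.exp (-s)) s := by
  simpa using (hasDerivAt_neg s).exp

lemma hasDerivAt_emdenFowler {g' : ℝ → ℝ} (hg : ∀ r, 0 < r → HasDerivAt g (g' r) r) (s : ℝ) :
    HasDerivAt (emdenFowler a g) (-emdenFowler a (fun r => a * g r + r * g' r) s) s := by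
  have h_pos := Real.exp_pos (-s)
  refine (((hasDerivAt_exp_neg s).rpow_const (p := a) (Or.inl h_pos.ne')).mul
    ((hg _ h_pos).comp s (hasDerivAt_exp_neg s))).congr_deriv ?_
  rw [emdenFowler, Real.rpow_sub_one h_pos.ne']
  simp only [Function.comp]
  field_simp
  ring

lemma tendsto_emdenFowler_atBot {y : ℝ} (hg : Tendsto (fun r => r ^ a * g r) atTop (𝓝 y)) :
    Tendsto (emdenFowler a g) atBot (𝓝 y) :=
  hg.comp (Real.tendsto_exp_atTop.comp tendsto_neg_atBot_atTop)

lemma lintegral_abs_emdenFowler_rpow {q : ℝ} (haq : a * q = d) (g : ℝ → ℝ) :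
    ∫⁻ s, ENNReal.ofReal (|emdenFowler a g s| ^ q) =
      ∫⁻ r in Ioi 0, ENNReal.ofReal (|g r| ^ q * r ^ (d - 1)) := by
  have h_range : (fun s => Real.exp (-s)) '' univ = Ioi 0 := by
    rw [image_univ, ← Real.range_exp]
    exact (Equiv.neg ℝ).surjective.range_comp Real.exp
  have h_inj : InjOn (fun s => Real.exp (-s)) univ :=
    (Real.exp_injective.comp neg_injective).injOn
  rw [← h_range, lintegral_image_eq_lintegral_abs_deriv_mul .univ
    (fun s _ => (hasDerivAt_exp_neg s).hasDerivWithinAt) h_inj, setLIntegral_univ]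
  congr with s
  have h_pos := Real.exp_pos (-s)
  rw [abs_neg, abs_of_pos h_pos, ← ENNReal.ofReal_mul h_pos.le, emdenFowler, abs_mul,
    abs_of_pos (Real.rpow_pos_of_pos h_pos a), Real.mul_rpow (by positivity) (abs_nonneg _),
    ← Real.rpow_mul h_pos.le, haq, Real.rpow_sub_one h_pos.ne']
  congr 1
  field_simp

lemma emdenFowler_mul_oddPow (ha : a * (p - 1) = 2) (Z : ℝ → ℝ) (s : ℝ) :
    emdenFowler a (fun r => r ^ 2 * oddPow p (Z r)) s = oddPow p (emdenFowler a Z s) := by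
  have h_pos := Real.exp_pos (-s)
  rw [emdenFowler, emdenFowler, oddPow_mul (Real.rpow_pos_of_pos h_pos a), ← Real.rpow_mul h_pos.le,
    show a * p = a + 2 by linarith, Real.rpow_add h_pos, Real.rpow_two]
  ring

lemma hasDerivAt_deriv_emdenFowler (ha : a * (p - 1) = 2) (hZ : IsLaneEmdenSolution d p Z Z')
    (s : ℝ) :
    HasDerivAt (fun s => -emdenFowler a (fun r => a * Z r + r * Z' r) s)
      ((d - 2 - 2 * a) * -emdenFowler a (fun r => a * Z r + r * Z' r) s
        - (oddPow p (emdenFowler a Z s) - a * (d - 2 - a) * emdenFowler a Z s)) s := by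
  have h_inner : ∀ r, 0 < r → HasDerivAt (fun r => a * Z r + r * Z' r)
      (a * Z' r + (1 * Z' r + r * (-((d - 1) / r) * Z' r - oddPow p (Z r)))) r := fun r hr =>
    ((hZ.hasDerivAt r hr).const_mul a).add ((hasDerivAt_id r).mul (hZ.hasDerivAt_deriv r hr))
  refine (hasDerivAt_emdenFowler h_inner s).neg.congr_deriv ?_
  rw [← emdenFowler_mul_oddPow ha]
  have := Real.exp_pos (-s)
  simp only [emdenFowler]
  field_simp
  ring

lemma tendsto_deriv_emdenFowler_atBot (hZ_lim : Tendsto (fun r => r ^ a * Z r) atTop (𝓝 0))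
    (hZ'_lim : Tendsto (fun r => r ^ (a + 1) * Z' r) atTop (𝓝 0)) :
    Tendsto (fun s => -emdenFowler a (fun r => a * Z r + r * Z' r) s) atBot (𝓝 0) := by
  have h_lim : Tendsto (fun r => r ^ a * (a * Z r + r * Z' r)) atTop (𝓝 0) := by
    have h_sum := (hZ_lim.const_mul a).add hZ'_lim
    rw [mul_zero, add_zero] at h_sum
    refine h_sum.congr' ?_
    filter_upwards [eventually_gt_atTop 0] with r hr
    rw [Real.rpow_add_one hr.ne']
    ring
  simpa using (tendsto_emdenFowler_atBot h_lim).neg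

lemma exists_emdenFowler_ne_zero (hg : ∃ r, 0 < r ∧ g r ≠ 0) : ∃ s, emdenFowler a g s ≠ 0 := by
  obtain ⟨r, hr, hr_ne⟩ := hg
  refine ⟨-Real.log r, mul_ne_zero (Real.rpow_pos_of_pos (Real.exp_pos _) a).ne' ?_⟩
  rwa [neg_neg, Real.exp_log hr]

lemma hasDerivAt_abs_rpow_div_sub {b : ℝ} (hp : 0 < p) (x : ℝ) :
    HasDerivAt (fun x => |x| ^ (p + 1) / (p + 1) - b * x ^ 2 / 2) (oddPow p x - b * x) x :=
  ((hasDerivAt_abs_rpow_div hp x).sub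
    (((hasDerivAt_pow 2 x).const_mul b).div_const 2)).congr_deriv (by push_cast; ring)

lemma exists_virial_le {b q ε : ℝ} (hp : 0 < p) (hb : 0 ≤ b) (hq : p + 1 ≤ q) (hε : 0 < ε) :
    ∃ C, 0 ≤ C ∧ ∀ x, 2 * (|x| ^ (p + 1) / (p + 1) - b * x ^ 2 / 2) + x * (oddPow p x - b * x)
      ≤ ε + C * |x| ^ q := by
  obtain ⟨C, hC, h_le⟩ := exists_mul_rpow_le_add_mul_rpow (k := 2 / (p + 1) + 1) (by positivity)
    hε (by linarith : 0 < p + 1) hq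
  refine ⟨C, hC, fun x => le_trans ?_ (h_le |x| (abs_nonneg x))⟩
  rw [mul_sub x, mul_oddPow (by linarith)]
  have : 0 ≤ 2 * (b * x ^ 2) := by positivity
  linear_combination this

/- `a = 2 / (p - 1)` makes the equation autonomous and turns the `L ^ q` norm with
`q = d (p - 1) / 2` into an unweighted one. -/
theorem lintegral_eq_top_of_isLaneEmdenSolution (hd : 2 < d) (hp : d + 2 < (d - 2) * p)
    (ha : a * (p - 1) = 2) (hZ : IsLaneEmdenSolution d p Z Z')
    (hZ_lim : Tendsto (fun r => r ^ a * Z r) atTop (𝓝 0))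
    (hZ'_lim : Tendsto (fun r => r ^ (a + 1) * Z' r) atTop (𝓝 0)) (hZ_ne : ∃ r, 0 < r ∧ Z r ≠ 0) :
    ∫⁻ r in Ioi 0, ENNReal.ofReal (|Z r| ^ (d * (p - 1) / 2) * r ^ (d - 1)) = ⊤ := by
  have hp₁ : 1 < p := by nlinarith
  have ha_lt : 2 * a < d - 2 := by nlinarith
  have ha₀ : 0 < a := pos_of_mul_pos_left (by linarith) (sub_pos.2 hp₁).le
  set b := a * (d - 2 - a)
  have hb : 0 ≤ b := mul_nonneg ha₀.le (by linarith)
  have hF := hasDerivAt_abs_rpow_div_sub (b := b) (by linarith : 0 < p)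
  have hw := hasDerivAt_emdenFowler (a := a) hZ.hasDerivAt
  have hw' := hasDerivAt_deriv_emdenFowler ha hZ
  obtain ⟨s, hs⟩ := exists_energy_pos (sub_pos.2 ha_lt) hF
    (by simp [Real.zero_rpow (by linarith : p + 1 ≠ 0)]) hw hw' (tendsto_emdenFowler_atBot hZ_lim)
    (tendsto_deriv_emdenFowler_atBot hZ_lim hZ'_lim) (exists_emdenFowler_ne_zero hZ_ne)
  rw [← lintegral_abs_emdenFowler_rpow (a := a) (by linear_combination d / 2 * ha)]
  exact lintegral_abs_rpow_eq_top_of_energy_pos (sub_pos.2 ha_lt).le (by nlinarith) hF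
    (fun ε hε => exists_virial_le (by linarith) hb (by nlinarith) hε) hw hw' hs

end EmdenFowler

theorem stmt0_general (d p l : ℝ) (hd : 2 < d) (hp : (d + 2) / (d - 2) < p) (hl : l ≠ 0) :
    ∃ Z : ℝ → ℝ,
      ContDiffOn ℝ 2 Z (Ioi 0) ∧
      (∀ r, 0 < r →
        deriv (deriv Z) r + (d - 1) / r * deriv Z r + |Z r| ^ (p - 1) * Z r = 0) ∧
      (∃ C > 0, ∃ r₀ > 0, ∀ r, r₀ ≤ r →
        |r ^ (d - 2) * Z r - l| ≤ C * r ^ (d - (d - 2) * p)) ∧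
      ∫⁻ r in Ioi 0, ENNReal.ofReal (|Z r| ^ (d * (p - 1) / 2) * r ^ (d - 1)) = ⊤ := by
  rw [div_lt_iff₀' (by linarith)] at hp
  have hp₁ : 1 < p := by nlinarith
  have hn : -1 < fundamentalExponent d p := neg_one_lt_fundamentalExponent hd (by linarith)
  obtain ⟨v, hv, h_fix, h_mean⟩ := exists_isFixedPt_picard_oddPow hd hp₁ hn l
  have hZ := isLaneEmdenSolution_singularProfile hd hv fun τ =>
    hasDerivAt_of_isFixedPt_picard hn (continuous_oddPow hp₁.le) hv h_fix
  have ha : 2 / (p - 1) * (p - 1) = 2 := div_mul_cancel₀ _ (by linarith)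
  have ha_lt : 2 / (p - 1) < d - 2 := by
    rw [div_lt_iff₀ (by linarith)]
    linarith
  have hn₁ : 0 < fundamentalExponent d p + 1 := by linarith
  exact ⟨singularProfile d v, hZ.contDiffOn hp₁.le, fun r => hZ.deriv_deriv_add_eq_zero,
    ⟨((d - 2) ^ 2)⁻¹ * |l| ^ p / (fundamentalExponent d p + 1), by positivity, 1, one_pos,
      fun r hr => abs_rpow_mul_singularProfile_sub_le hd (by linarith) hv h_fix h_mean
        (one_pos.trans_le hr)⟩,
    lintegral_eq_top_of_isLaneEmdenSolution hd hp ha hZ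
      (tendsto_rpow_mul_singularProfile hd ha_lt hv)
      (tendsto_rpow_mul_deriv_singularProfile hd ha_lt hv)
      (exists_singularProfile_ne_zero hd hv (eq_of_isFixedPt_picard_zero h_fix ▸ hl))⟩

/-- existence of singular stationary solutions `Z_l` of
`ΔZ + |Z|^{p-1}Z = 0` on `ℝ⁴ \ {0}` (in radial form), with asymptotics
`r²Z(r) = l + O(r^{4-2p})`, failing to lie in `L^{2(p-1)}(ℝ⁴)`. -/
theorem stmt0 (p : ℝ) (hp : 3 < p) (l : ℝ) (hl : l ≠ 0) :
    ∃ Z : ℝ → ℝ,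
      ContDiffOn ℝ 2 Z (Ioi (0:ℝ)) ∧
      (∀ r : ℝ, 0 < r →
        deriv (deriv Z) r + (3 / r) * deriv Z r + |Z r| ^ (p - 1) * Z r = 0) ∧
      (∃ C > (0:ℝ), ∃ r₀ > (0:ℝ), ∀ r : ℝ, r₀ ≤ r →
        |r ^ 2 * Z r - l| ≤ C * r ^ (4 - 2 * p)) ∧
      (∫⁻ r in Ioi (0:ℝ), ENNReal.ofReal (|Z r| ^ (2 * (p - 1)) * r ^ 3)) = ⊤ := by
  have h_general := stmt0_general 4 p l (by norm_num) (by norm_num; exact hp) hl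
  simp only [show (4 : ℝ) - 1 = (3 : ℕ) by norm_num, show (4 : ℝ) - 2 = (2 : ℕ) by norm_num,
    show 4 * (p - 1) / 2 = 2 * (p - 1) by ring, Real.rpow_natCast] at h_general
  exact mod_cast h_general
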